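/- Let a be a ribbon with n ≥ 4 nodes. Then every extension of a has at least δ₀(a) critical points in the open unit disk; that is, γ(a) ≥ δ₀(a). -/

import Mathlib

open scoped RealInnerProductSpace

noncomputable section

abbrev E2 : Type := EuclideanSpace ℝ (Fin 2)

/-- The point (cos t, sin t) on the unit circle in ℝ². -/
def sphPt (t : ℝ) : E2 := (EuclideanSpace.equiv (Fin 2) ℝ).symm ![Real.cos t, Real.sin t]

/-- A ribbon with `n` nodes, encoded via the angle parametrization `g = φ ∘ (cos, sin)`
of a C^∞ function `φ : S¹ → ℝ` whose critical points on the circle are exactly the `n`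
nondegenerate local extrema (nodes) at angles `θ 0 < θ 1 < ⋯ < θ (n-1)` in `[0, 2π)`,
with pairwise distinct critical values, together with a marking `ν` of the nodes by `±1`. -/
structure Ribbon (n : ℕ) : Type where
  g : ℝ → ℝ
  θ : Fin n → ℝ
  ν : Fin n → ℤ
  n_even : Even n
  n_pos : 0 < n
  smooth_g : ContDiff ℝ (⊤ : ℕ∞) g
  periodic_g : Function.Periodic g (2 * Real.pi)
  theta_mem : ∀ i, θ i ∈ Set.Ico (0 : ℝ) (2 * Real.pi)
  theta_mono : StrictMono θ
  node_crit : ∀ i, deriv g (θ i) = 0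
  node_nondeg : ∀ i, deriv (deriv g) (θ i) ≠ 0
  crit_only : ∀ t ∈ Set.Ico (0 : ℝ) (2 * Real.pi), deriv g t = 0 → ∃ i, t = θ i
  values_distinct : ∀ i j, g (θ i) = g (θ j) → i = j
  nu_sign : ∀ i, ν i = 1 ∨ ν i = -1

/-- The signature σ = s₊ − s₋ of a ribbon. -/
def Ribbon.sigma {n : ℕ} (a : Ribbon n) : ℤ := ∑ i, a.ν i

/-- Critical points of `f` in the open unit disk. -/
def critPts (f : E2 → ℝ) : Set E2 :=
  {x | x ∈ Metric.ball (0 : E2) 1 ∧ fderiv ℝ f x = 0}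

/-- `f : ℝ² → ℝ` is an extension of the ribbon `a`: it is C^∞, agrees with `φ` on the unit
circle, has nowhere-vanishing gradient on the circle, and at each node the radial derivative
`⟪∇f(p), p⟫` has sign `ν p` if `p` is a local maximum of `φ` (second derivative of `g`
negative there) and sign `−ν p` if `p` is a local minimum of `φ`. -/
def IsExtension {n : ℕ} (a : Ribbon n) (f : E2 → ℝ) : Prop :=
  ContDiff ℝ (⊤ : ℕ∞) f ∧
  (∀ t : ℝ, f (sphPt t) = a.g t) ∧
  (∀ x ∈ Metric.sphere (0 : E2) 1, fderiv ℝ f x ≠ 0) ∧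
  (∀ i : Fin n,
    (deriv (deriv a.g) (a.θ i) < 0 →
      0 < (a.ν i : ℝ) * ⟪gradient f (sphPt (a.θ i)), sphPt (a.θ i)⟫) ∧
    (0 < deriv (deriv a.g) (a.θ i) →
      (a.ν i : ℝ) * ⟪gradient f (sphPt (a.θ i)), sphPt (a.θ i)⟫ < 0))

/-- The ribbon invariant γ: the infimum, over all extensions `f` of `a`, of the number of
critical points of `f` in the open unit disk (a value in `ℕ∞`). -/
def gammaR {n : ℕ} (a : Ribbon n) : ℕ∞ :=
  sInf {k : ℕ∞ | ∃ f : E2 → ℝ, IsExtension a f ∧ (critPts f).encard = k}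

/-- The cyclically next node index. -/
def Ribbon.next {n : ℕ} (a : Ribbon n) (i : Fin n) : Fin n :=
  ⟨((i : ℕ) + 1) % n, Nat.mod_lt _ a.n_pos⟩

/-- The reduced cluster number δ₀(a): the least cardinality of a finite subset of ℝ meeting
every closed interval with endpoints `l i`, `l (i+1)` such that the nodes `p i`, `p (i+1)` are
both positive and the interval contains no level of a negative node. -/
def reducedClusterNumber {n : ℕ} (a : Ribbon n) : ℕ :=
  sInf {k : ℕ | ∃ A : Finset ℝ, A.card = k ∧
    ∀ i : Fin n,
      (a.ν i = 1 ∧ a.ν (a.next i) = 1 ∧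
        ∀ j : Fin n, a.ν j = -1 →
          a.g (a.θ j) ∉ Set.uIcc (a.g (a.θ i)) (a.g (a.θ (a.next i)))) →
      ∃ x ∈ A, x ∈ Set.uIcc (a.g (a.θ i)) (a.g (a.θ (a.next i)))}

/-!
If a positive minimum and a positive maximum are consecutive, the minimum is a strict local
minimum of `f` on the closed disk, and the two arcs at the maximum join it to the minimum on the
other side. At the maximum `f` decreases inwards, so these arcs can be pushed below the level of
the maximum. The least level at which the two minima are joined inside the disk is attained, by
compactness, and it is a mountain pass level: if every point of that level were nonstationary or a
strict local minimum, a vector field decreasing `f` and pointing into the disk would join the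
minima at a lower level. The resulting stationary point is not on the circle, because in the range
of levels at hand stationary boundary points are positive minima. Thus the critical values of
`f` meet every interval in the definition of `δ₀`.
-/

open Set Filter Topology Metric

section StrictLocalMin

variable {X β : Type*} [TopologicalSpace X]

/-- `a` is a strict local minimum of the restriction of `f` to `s`. -/
def IsStrictLocalMinOn [Preorder β] (f : X → β) (s : Set X) (a : X) : Prop :=
  ∀ᶠ x in 𝓝[s \ {a}] a, f a < f x

theorem isStrictLocalMinOn_iff [Preorder β] {f : X → β} {s : Set X} {a : X} :
    IsStrictLocalMinOn f s a ↔ ∀ᶠ x in 𝓝[s] a, x ≠ a → f a < f x := by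
  rw [IsStrictLocalMinOn, sdiff_eq, nhdsWithin_inter', eventually_inf_principal]
  rfl

theorem IsStrictLocalMinOn.subset_singleton [T1Space X] [LinearOrder β] {f : X → β}
    {s C : Set X} {a : X}
    (h : IsStrictLocalMinOn f s a) (hC : IsPreconnected C) (hCs : C ⊆ s) (ha : a ∈ C)
    (hle : ∀ x ∈ C, f x ≤ f a) : C ⊆ {a} := by
  obtain ⟨U, hU, haU, hUs⟩ := mem_nhdsWithin.1 (isStrictLocalMinOn_iff.1 h)
  have hcover : C ⊆ U ∪ {a}ᶜ := fun x _ => by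
    by_cases hx : x = a
    · exact Or.inl (hx ▸ haU)
    · exact Or.inr hx
  by_contra hne
  obtain ⟨w, hwC, hwa⟩ := not_subset.1 hne
  obtain ⟨x, hxC, hxU, hxa⟩ :=
    hC U {a}ᶜ hU isOpen_compl_singleton hcover ⟨a, ha, haU⟩ ⟨w, hwC, hwa⟩
  exact (hUs ⟨hxU, hCs hxC⟩ hxa).not_ge (hle x hxC)

end StrictLocalMin

section JoiningLevels

theorem isPreconnected_iInter_of_directed {ι X : Type*} [TopologicalSpace X] [T2Space X]
    [Nonempty ι] {s : ι → Set X} (hdir : Directed (· ⊇ ·) s) (hcompact : ∀ i, IsCompact (s i))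
    (hconn : ∀ i, IsPreconnected (s i)) : IsPreconnected (⋂ i, s i) := by
  have hclosed : IsClosed (⋂ i, s i) := isClosed_iInter fun i => (hcompact i).isClosed
  have hinter : IsCompact (⋂ i, s i) :=
    (hcompact (Classical.arbitrary ι)).of_isClosed_subset hclosed (iInter_subset _ _)
  rw [isPreconnected_iff_subset_of_fully_disjoint_closed hclosed]
  intro A B hA hB hAB hdisj
  obtain ⟨U, V, hU, hV, hAU, hBV, hUV⟩ := SeparatedNhds.of_isCompact_isCompact
    (hinter.inter_right hA) (hinter.inter_right hB)
    (hdisj.mono inter_subset_right inter_subset_right)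
  have hcover : ⋂ i, s i ⊆ U ∪ V := fun x hx =>
    (hAB hx).imp (fun h => hAU ⟨hx, h⟩) fun h => hBV ⟨hx, h⟩
  obtain ⟨i, hi⟩ := exists_subset_nhds_of_isCompact hdir hcompact
    fun x hx => (hU.union hV).mem_nhds (hcover hx)
  rcases (isPreconnected_iff_subset_of_disjoint.1 (hconn i)) U V hU hV hi
    (by rw [hUV.inter_eq, inter_empty]) with hiU | hiV
  · exact Or.inl fun x hx => (hAB hx).resolve_right fun hxB =>
      disjoint_left.1 hUV (hiU (mem_iInter.1 hx i)) (hBV ⟨hx, hxB⟩)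
  · exact Or.inr fun x hx => (hAB hx).resolve_left fun hxA =>
      disjoint_left.1 hUV (hAU ⟨hx, hxA⟩) (hiV (mem_iInter.1 hx i))

variable {X : Type*} [TopologicalSpace X]

theorem isCompact_connectedComponentIn {F : Set X} (hF : IsCompact F) (x : X) :
    IsCompact (connectedComponentIn F x) := by
  by_cases hx : x ∈ F
  · have : CompactSpace F := isCompact_iff_compactSpace.1 hF
    rw [connectedComponentIn_eq_image hx]
    exact isClosed_connectedComponent.isCompact.image continuous_subtype_val
  · rw [connectedComponentIn_eq_empty hx]
    exact isCompact_empty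

theorem mem_connectedComponentIn_comm {F : Set X} {x y : X} :
    y ∈ connectedComponentIn F x ↔ x ∈ connectedComponentIn F y := by
  suffices h : ∀ x y : X, y ∈ connectedComponentIn F x → x ∈ connectedComponentIn F y from
    ⟨h x y, h y x⟩
  intro x y hy
  rw [← connectedComponentIn_eq hy]
  exact mem_connectedComponentIn (connectedComponentIn_nonempty_iff.1 ⟨y, hy⟩)

/-- The levels `l` for which `x` and `y` lie in one connected component of the sublevel set
`{z ∈ K | f z ≤ l}`. The least of them is the minimax level of a mountain pass argument. -/
def joiningLevels (f : X → ℝ) (K : Set X) (x y : X) : Set ℝ :=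
  {l | y ∈ connectedComponentIn (K ∩ f ⁻¹' Iic l) x}

variable {f : X → ℝ} {K C : Set X} {x y : X} {l m : ℝ}

theorem joiningLevels_comm : joiningLevels f K x y = joiningLevels f K y x :=
  ext fun _ => mem_connectedComponentIn_comm

theorem right_le_of_mem_joiningLevels (hl : l ∈ joiningLevels f K x y) : f y ≤ l :=
  (connectedComponentIn_subset _ _ hl).2

theorem left_le_of_mem_joiningLevels (hl : l ∈ joiningLevels f K x y) : f x ≤ l :=
  right_le_of_mem_joiningLevels (joiningLevels_comm.subset hl)

theorem exists_isLeast_joiningLevels [T2Space X] (hK : IsCompact K) (hf : Continuous f)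
    (hne : (joiningLevels f K x y).Nonempty) : ∃ m, IsLeast (joiningLevels f K x y) m := by
  have hbdd : BddBelow (joiningLevels f K x y) := ⟨f x, fun _ => left_le_of_mem_joiningLevels⟩
  have : Nonempty (joiningLevels f K x y) := hne.to_subtype
  let component (l : joiningLevels f K x y) : Set X :=
    connectedComponentIn (K ∩ f ⁻¹' Iic l.1) x
  have hmono : Monotone component := fun l l' hll' =>
    connectedComponentIn_mono x (inter_subset_inter_right K (preimage_mono (Iic_subset_Iic.2 hll')))
  have hconn : IsPreconnected (⋂ l, component l) :=
    isPreconnected_iInter_of_directed hmono.directed_ge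
      (fun l => isCompact_connectedComponentIn (hK.inter_right (isClosed_Iic.preimage hf)) x)
      fun l => isPreconnected_connectedComponentIn
  have hsub : ⋂ l, component l ⊆ K ∩ f ⁻¹' Iic (sInf (joiningLevels f K x y)) := fun z hz =>
    have hzl l := connectedComponentIn_subset _ _ (mem_iInter.1 hz l)
    ⟨(hzl (Classical.arbitrary _)).1, le_csInf hne fun l hl => (hzl ⟨l, hl⟩).2⟩
  refine ⟨_, hconn.subset_connectedComponentIn (mem_iInter.2 fun l => ?_) hsub
    (mem_iInter.2 Subtype.prop), fun _ => csInf_le hbdd⟩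
  exact mem_connectedComponentIn (connectedComponentIn_nonempty_iff.1 ⟨y, l.2⟩)

-- The lower joining set is the image of `C` at a small time `δ` together with the tracks of `x`
-- and `y`; its compactness makes the drop below `m` uniform.
theorem exists_mem_joiningLevels_lt_of_deformation (hf : Continuous f) (hCcompact : IsCompact C)
    (hCconn : IsPreconnected C) (hCK : C ⊆ K) (hx : x ∈ C) (hy : y ∈ C) (hfx : f x < m)
    (hfy : f y < m) {H : ℝ → X → X} (hH : Continuous fun p : ℝ × X => H p.1 p.2)
    (hH0 : ∀ z ∈ C, H 0 z = z) (hlower : ∀ᶠ s in 𝓝[>] 0, ∀ z ∈ C, H s z ∈ K ∩ f ⁻¹' Iio m) :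
    ∃ l ∈ joiningLevels f K x y, l < m := by
  have hHs (s : ℝ) : Continuous (H s) := by fun_prop
  have htrack (z : X) : Continuous fun s => H s z := by fun_prop
  obtain ⟨δ, hδ, hδlower⟩ := mem_nhdsGT_iff_exists_Ioc_subset.1 hlower
  have h0 : (0 : ℝ) ∈ Icc 0 δ := left_mem_Icc.2 (le_of_lt hδ)
  have hδ' : δ ∈ Icc 0 δ := right_mem_Icc.2 (le_of_lt hδ)
  have htrack_lower : ∀ z ∈ C, f z < m → ∀ s ∈ Icc 0 δ, H s z ∈ K ∩ f ⁻¹' Iio m := by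
    intro z hz hfz s hs
    rcases hs.1.eq_or_lt with rfl | hpos
    · exact (hH0 z hz).symm ▸ ⟨hCK hz, hfz⟩
    · exact hδlower ⟨hpos, hs.2⟩ z hz
  let T : Set X := (fun s => H s x) '' Icc 0 δ ∪ H δ '' C ∪ (fun s => H s y) '' Icc 0 δ
  have hTconn : IsPreconnected T :=
    ((isPreconnected_Icc.image _ (htrack x).continuousOn).union (H δ x)
      (mem_image_of_mem (fun s => H s x) hδ') (mem_image_of_mem _ hx)
      (hCconn.image _ (hHs δ).continuousOn)).union (H δ y) (Or.inr (mem_image_of_mem _ hy))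
      (mem_image_of_mem (fun s => H s y) hδ') (isPreconnected_Icc.image _ (htrack y).continuousOn)
  have hTcompact : IsCompact T :=
    ((isCompact_Icc.image (htrack x)).union (hCcompact.image (hHs δ))).union
      (isCompact_Icc.image (htrack y))
  have hTsub : T ⊆ K ∩ f ⁻¹' Iio m :=
    union_subset (union_subset (image_subset_iff.2 (htrack_lower x hx hfx))
      (image_subset_iff.2 (hδlower ⟨hδ, le_rfl⟩))) (image_subset_iff.2 (htrack_lower y hy hfy))
  have hxT : x ∈ T := Or.inl (Or.inl ⟨0, h0, hH0 x hx⟩)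
  have hyT : y ∈ T := Or.inr ⟨0, h0, hH0 y hy⟩
  obtain ⟨z, hz, hmax⟩ := hTcompact.exists_isMaxOn ⟨x, hxT⟩ hf.continuousOn
  have hTle : T ⊆ K ∩ f ⁻¹' Iic (f z) := fun w hw => ⟨(hTsub hw).1, hmax hw⟩
  exact ⟨f z, hTconn.subset_connectedComponentIn hxT hTle hyT, (hTsub hz).2⟩

end JoiningLevels

section Descent

variable {E : Type*} [NormedAddCommGroup E] [NormedSpace ℝ E] {f : E → ℝ}

theorem image_add_smul_lt_of_fderiv_neg (hf : Differentiable ℝ f) {y v : E} {b : ℝ} (hb : 0 < b)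
    (h : ∀ r ∈ Ioo 0 b, fderiv ℝ f (y + r • v) v < 0) : f (y + b • v) < f y := by
  have hline (r : ℝ) : HasDerivAt (fun r : ℝ => f (y + r • v)) (fderiv ℝ f (y + r • v) v) r :=
    (hf _).hasFDerivAt.comp_hasDerivAt r <| by
      simpa using ((hasDerivAt_id r).smul_const v).const_add y
  have hanti : StrictAntiOn (fun r : ℝ => f (y + r • v)) (Icc 0 b) := by
    refine strictAntiOn_of_deriv_neg (convex_Icc 0 b)
      (fun r _ => (hline r).continuousAt.continuousWithinAt) fun r hr => ?_
    rw [interior_Icc] at hr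
    exact (hline r).deriv.trans_lt (h r hr)
  simpa using hanti (left_mem_Icc.2 hb.le) (right_mem_Icc.2 hb.le) hb

theorem eventually_image_add_smul_lt (hf : ContDiff ℝ 1 f) {V : E → E} (hV : Continuous V)
    {C : Set E} (hC : IsCompact C) {m : ℝ} (hle : ∀ x ∈ C, f x ≤ m)
    (hneg : ∀ x ∈ C, f x = m → fderiv ℝ f x (V x) < 0) :
    ∀ᶠ s in 𝓝[>] (0 : ℝ), ∀ x ∈ C, f (x + s • V x) < m := by
  have hfc := hf.continuous
  suffices key : ∀ᶠ s in 𝓝 (0 : ℝ), ∀ x ∈ C, x ∈ C → 0 < s → f (x + s • V x) < m from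
    eventually_nhdsWithin_iff.2 (key.mono fun s hs hpos x hx => hs x hx hx hpos)
  refine hC.eventually_forall_of_forall_eventually fun x hx => ?_
  rcases (hle x hx).lt_or_eq with hlt | heq
  · have hcont : Continuous fun z : ℝ × E => f (z.2 + z.1 • V z.2) := by fun_prop
    filter_upwards [hcont.continuousAt.eventually_lt continuousAt_const (by simpa using hlt)]
      with z hz _ _ using hz
  · have hcont : Continuous fun z : ℝ × E => fderiv ℝ f (z.2 + z.1 • V z.2) (V z.2) :=
      ((hf.continuous_fderiv one_ne_zero).comp (by fun_prop)).clm_apply (by fun_prop)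
    have hnear : ∀ᶠ z in 𝓝 ((0 : ℝ), x), fderiv ℝ f (z.2 + z.1 • V z.2) (V z.2) < 0 :=
      hcont.continuousAt.eventually_lt continuousAt_const (by simpa using hneg x hx heq)
    obtain ⟨ε, hε, hball⟩ := Metric.eventually_nhds_iff.1 hnear
    filter_upwards [ball_mem_nhds _ hε] with z hz hzC hpos
    refine (image_add_smul_lt_of_fderiv_neg (hf.differentiable one_ne_zero) hpos
      fun r hr => hball (y := (r, z.2)) ?_).trans_le (hle _ hzC)
    refine (max_le_max ?_ le_rfl).trans_lt (mem_ball.1 hz)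
    simpa [abs_of_pos hr.1, abs_of_pos hpos] using hr.2.le

theorem tendsto_inv_norm_smul_nhds {x : E} (hx : x ∈ sphere 0 1) :
    Tendsto (fun y => ‖y‖⁻¹ • y) (𝓝 x) (𝓝[sphere 0 1] x) := by
  have hx1 : ‖x‖ = 1 := mem_sphere_zero_iff_norm.1 hx
  have hx0 : x ≠ 0 := norm_pos_iff.1 (hx1 ▸ one_pos)
  have hcont : ContinuousAt (fun y : E => ‖y‖⁻¹ • y) x :=
    (continuousAt_id.norm.inv₀ (norm_ne_zero_iff.2 hx0)).smul continuousAt_id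
  refine tendsto_nhdsWithin_iff.2 ⟨by simpa [hx1] using hcont.tendsto, ?_⟩
  filter_upwards [isOpen_ne.mem_nhds hx0] with y hy
  exact mem_sphere_zero_iff_norm.2 (norm_smul_inv_norm (𝕜 := ℝ) hy)

end Descent

section BallStationary

variable {E : Type*} [NormedAddCommGroup E] [InnerProductSpace ℝ E] [CompleteSpace E]
  {f : E → ℝ} {C : Set E} {x y : E} {l m : ℝ}

/-- The first-order necessary condition for `x` to minimise `f` on the closed unit ball. At
interior points it says that the gradient vanishes, at boundary points that the gradient is a
nonpositive multiple of `x`. -/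
def IsBallStationary (f : E → ℝ) (x : E) : Prop :=
  ⟪gradient f x, x⟫ = -‖gradient f x‖

theorem IsBallStationary.fderiv_eq_zero (h : IsBallStationary f x) (hx : ‖x‖ < 1) :
    fderiv ℝ f x = 0 := by
  rw [IsBallStationary] at h
  have habs := abs_real_inner_le_norm (gradient f x) x
  rw [h, abs_neg, abs_norm] at habs
  have hgrad : gradient f x = 0 := by
    by_contra hne
    nlinarith [norm_pos_iff.2 hne]
  simpa [gradient] using hgrad

theorem IsBallStationary.inner_gradient_eq_zero {v : E} (h : IsBallStationary f x) (hx : ‖x‖ = 1)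
    (hv : ⟪x, v⟫ = 0) : ⟪gradient f x, v⟫ = 0 := by
  have hgrad : gradient f x = -(‖gradient f x‖ • x) := by
    rw [← neg_eq_iff_eq_neg, ← one_smul ℝ (-gradient f x), ← hx, ← norm_neg (gradient f x),
      ← inner_eq_norm_mul_iff_real, inner_neg_left, h, norm_neg, hx, neg_neg, mul_one]
  rw [hgrad, inner_neg_left, real_inner_smul_left, hv, mul_zero, neg_zero]

theorem norm_gradient_add_inner_pos (h : ¬IsBallStationary f x) (hx : ‖x‖ ≤ 1) :
    0 < ‖gradient f x‖ + ⟪gradient f x, x⟫ := by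
  have habs := neg_le_of_abs_le (abs_real_inner_le_norm (gradient f x) x)
  have hne : ⟪gradient f x, x⟫ ≠ -‖gradient f x‖ := h
  have : -‖gradient f x‖ < ⟪gradient f x, x⟫ :=
    lt_of_le_of_ne (by nlinarith [norm_nonneg (gradient f x)]) hne.symm
  linarith

/-- A continuous vector field that decreases `f` at the points of level `m` that are not
stationary on the unit ball, and points strictly into the ball at all other boundary points
below level `m`. -/
def ballDescentField (f : E → ℝ) (m : ℝ) (x : E) : E :=
  -(gradient f x + (‖gradient f x‖ + (m - f x)) • x)

theorem continuous_ballDescentField (hf : ContDiff ℝ 1 f) (m : ℝ) :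
    Continuous (ballDescentField f m) := by
  have hgrad : Continuous (gradient f) :=
    (InnerProductSpace.toDual ℝ E).symm.continuous.comp (hf.continuous_fderiv one_ne_zero)
  have hfc := hf.continuous
  unfold ballDescentField
  fun_prop

theorem fderiv_ballDescentField_neg (h : ¬IsBallStationary f x) (hx : ‖x‖ ≤ 1) (hfx : f x = m) :
    fderiv ℝ f x (ballDescentField f m x) < 0 := by
  have hgrad : 0 < ‖gradient f x‖ := norm_pos_iff.2 fun h0 => h (by simp [IsBallStationary, h0])
  have hinner : fderiv ℝ f x (ballDescentField f m x) =
      -(‖gradient f x‖ * (‖gradient f x‖ + ⟪gradient f x, x⟫)) := by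
    rw [← inner_gradient_left, ballDescentField, hfx, inner_neg_right, inner_add_right,
      real_inner_smul_right, real_inner_self_eq_norm_sq]
    ring
  rw [hinner, neg_lt_zero]
  exact mul_pos hgrad (norm_gradient_add_inner_pos h hx)

theorem inner_ballDescentField_neg (hx : ‖x‖ = 1) (hfx : f x ≤ m)
    (h : f x = m → ¬IsBallStationary f x) : ⟪x, ballDescentField f m x⟫ < 0 := by
  have hinner : ⟪x, ballDescentField f m x⟫ =
      -(‖gradient f x‖ + ⟪gradient f x, x⟫ + (m - f x)) := by
    rw [ballDescentField, inner_neg_right, inner_add_right, real_inner_smul_right,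
      real_inner_self_eq_norm_sq, hx, real_inner_comm]
    ring
  rw [hinner, neg_lt_zero]
  rcases hfx.lt_or_eq with hlt | heq
  · have habs := neg_le_of_abs_le (abs_real_inner_le_norm (gradient f x) x)
    rw [hx] at habs
    linarith
  · linarith [norm_gradient_add_inner_pos (h heq) hx.le]

theorem exists_mem_joiningLevels_lt_of_not_isBallStationary (hf : ContDiff ℝ 1 f)
    (hCcompact : IsCompact C) (hCconn : IsPreconnected C) (hCball : C ⊆ closedBall 0 1)
    (hle : ∀ z ∈ C, f z ≤ m) (hstat : ∀ z ∈ C, f z = m → ¬IsBallStationary f z)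
    (hx : x ∈ C) (hy : y ∈ C) (hfx : f x < m) (hfy : f y < m) :
    ∃ l ∈ joiningLevels f (closedBall 0 1) x y, l < m := by
  have hV := continuous_ballDescentField hf m
  have hnorm : ∀ z ∈ C, ‖z‖ ≤ 1 := fun z hz => mem_closedBall_zero_iff.1 (hCball hz)
  have hstay : ∀ᶠ s in 𝓝[>] (0 : ℝ), ∀ z ∈ C, ‖z + s • ballDescentField f m z‖ ^ 2 < 1 := by
    refine eventually_image_add_smul_lt (contDiff_norm_sq ℝ) hV hCcompact
      (fun z hz => pow_le_one₀ (norm_nonneg z) (hnorm z hz)) fun z hz hz1 => ?_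
    have hz1 : ‖z‖ = 1 := (pow_eq_one_iff_of_nonneg (norm_nonneg z) two_ne_zero).1 hz1
    rw [fderiv_norm_sq_apply, smul_apply, innerSL_apply_apply, two_nsmul]
    linarith [inner_ballDescentField_neg hz1 (hle z hz) (hstat z hz)]
  have hlower : ∀ᶠ s in 𝓝[>] (0 : ℝ), ∀ z ∈ C, f (z + s • ballDescentField f m z) < m :=
    eventually_image_add_smul_lt hf hV hCcompact hle fun z hz hzm =>
      fderiv_ballDescentField_neg (hstat z hz hzm) (hnorm z hz) hzm
  refine exists_mem_joiningLevels_lt_of_deformation hf.continuous hCcompact hCconn hCball hx hy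
    hfx hfy (H := fun s z => z + s • ballDescentField f m z) (by fun_prop) (by simp) ?_
  filter_upwards [hstay, hlower] with s hs hs' z hz
  exact ⟨mem_closedBall_zero_iff.2 ((sq_lt_one_iff₀ (norm_nonneg _)).1 (hs z hz)).le, hs' z hz⟩

theorem exists_isBallStationary_not_isStrictLocalMinOn [ProperSpace E] (hf : ContDiff ℝ 1 f)
    (hxy : x ≠ y) (hx : IsStrictLocalMinOn f (closedBall 0 1) x)
    (hy : f y < f x ∨ IsStrictLocalMinOn f (closedBall 0 1) y)
    (hl : l ∈ joiningLevels f (closedBall 0 1) x y) :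
    ∃ z ∈ closedBall 0 1, IsBallStationary f z ∧ ¬IsStrictLocalMinOn f (closedBall 0 1) z ∧
      f z ∈ Icc (f x) l := by
  obtain ⟨m, hm, hleast⟩ :=
    exists_isLeast_joiningLevels (isCompact_closedBall 0 1) hf.continuous ⟨l, hl⟩
  set C := connectedComponentIn (closedBall 0 1 ∩ f ⁻¹' Iic m) x
  have hCsub : C ⊆ closedBall 0 1 ∩ f ⁻¹' Iic m := connectedComponentIn_subset _ _
  have hyC : y ∈ C := hm
  have hxC : x ∈ C :=
    mem_connectedComponentIn (connectedComponentIn_nonempty_iff.1 ⟨y, hyC⟩)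
  have hnotmin : ∀ z ∈ C, f z = m → ¬IsStrictLocalMinOn f (closedBall 0 1) z := fun z hz hzm h =>
    have hsub := h.subset_singleton isPreconnected_connectedComponentIn
      (hCsub.trans inter_subset_left) hz fun w hw => hzm ▸ (hCsub hw).2
    hxy ((hsub hxC).trans (hsub hyC).symm)
  have hfx : f x < m := (hCsub hxC).2.lt_of_ne fun h => hnotmin x hxC h hx
  have hfy : f y < m := hy.elim (·.trans hfx) fun hy =>
    (hCsub hyC).2.lt_of_ne fun h => hnotmin y hyC h hy
  by_contra! hstat
  obtain ⟨l', hl', hlt⟩ := exists_mem_joiningLevels_lt_of_not_isBallStationary hf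
    (isCompact_connectedComponentIn
      ((isCompact_closedBall 0 1).inter_right (isClosed_Iic.preimage hf.continuous)) x)
    isPreconnected_connectedComponentIn (hCsub.trans inter_subset_left) (fun z hz => (hCsub hz).2)
    (fun z hz hzm h => hstat z (hCsub hz).1 h (hnotmin z hz hzm)
      ⟨hzm ▸ hfx.le, hzm ▸ hleast hl⟩) hxC hyC hfx hfy
  exact hlt.not_ge (hleast hl')

theorem eventually_image_inv_norm_smul_lt (hf : ContDiff ℝ 1 f) (hx : x ∈ sphere 0 1)
    (hin : ⟪gradient f x, x⟫ < 0) : ∀ᶠ y in 𝓝 x, ‖y‖ < 1 → f (‖y‖⁻¹ • y) < f y := by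
  have hcont : Continuous fun z : E × E => fderiv ℝ f z.1 z.2 :=
    ((hf.continuous_fderiv one_ne_zero).comp continuous_fst).clm_apply continuous_snd
  have hneg : ∀ᶠ z in 𝓝 (x, x), fderiv ℝ f z.1 z.2 < 0 :=
    hcont.continuousAt.eventually_lt continuousAt_const (by rwa [← inner_gradient_left])
  obtain ⟨ε, hε, hball⟩ := Metric.eventually_nhds_iff.1 hneg
  have hx0 : x ≠ 0 := norm_pos_iff.1 (mem_sphere_zero_iff_norm.1 hx ▸ one_pos)
  filter_upwards [ball_mem_nhds x hε, isOpen_ne.mem_nhds hx0,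
    (tendsto_inv_norm_smul_nhds hx).eventually (nhdsWithin_le_nhds (ball_mem_nhds x hε))]
    with y hyε hy0 huε hlt
  set u : E := ‖y‖⁻¹ • y
  have hsub : u - y = (1 - ‖y‖) • u := by
    rw [sub_smul, one_smul, smul_inv_smul₀ (norm_ne_zero_iff.2 hy0)]
  have hradial : f (y + (1 : ℝ) • (u - y)) < f y := by
    refine image_add_smul_lt_of_fderiv_neg (hf.differentiable one_ne_zero) one_pos fun r hr => ?_
    have hr' := (convex_ball x ε).add_smul_sub_mem hyε huε ⟨hr.1.le, hr.2.le⟩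
    nth_rewrite 2 [hsub]
    rw [map_smul, smul_eq_mul]
    exact mul_neg_of_pos_of_neg (sub_pos.2 hlt) (hball (y := (_, _)) (max_lt hr' huε))
  rwa [one_smul, add_sub_cancel] at hradial

theorem isStrictLocalMinOn_closedBall (hf : ContDiff ℝ 1 f) (hx : x ∈ sphere 0 1)
    (hmin : IsStrictLocalMinOn f (sphere 0 1) x) (hin : ⟪gradient f x, x⟫ < 0) :
    IsStrictLocalMinOn f (closedBall 0 1) x := by
  refine isStrictLocalMinOn_iff.2 ?_
  filter_upwards [nhdsWithin_le_nhds (eventually_image_inv_norm_smul_lt hf hx hin),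
    nhdsWithin_le_nhds ((tendsto_inv_norm_smul_nhds hx).eventually (isStrictLocalMinOn_iff.1 hmin)),
    self_mem_nhdsWithin] with y hradial hsphere hy hne
  rcases (mem_closedBall_zero_iff.1 hy).eq_or_lt with heq | hlt
  · simp only [heq, inv_one, one_smul] at hsphere
    exact hsphere hne
  · refine lt_of_le_of_lt ?_ (hradial hlt)
    by_cases hux : ‖y‖⁻¹ • y = x
    · rw [hux]
    · exact (hsphere hux).le

end BallStationary

section OneVariable

variable {g : ℝ → ℝ} {α β θ c : ℝ}

theorem isStrictLocalMinOn_univ_of_deriv_deriv_pos (hg : Differentiable ℝ g)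
    (hcrit : deriv g θ = 0) (hpos : 0 < deriv (deriv g) θ) : IsStrictLocalMinOn g univ θ := by
  obtain ⟨ε, hε, hsign⟩ := Metric.eventually_nhds_iff_ball.1
    (eventually_nhdsWithin_sign_eq_of_deriv_pos hpos hcrit)
  have hsub {u t : ℝ} (hu : u ∈ uIcc θ t) (ht : t ∈ ball θ ε) : u ∈ ball θ ε :=
    (convex_ball θ ε).ordConnected.uIcc_subset (mem_ball_self hε) ht hu
  rw [isStrictLocalMinOn_iff, nhdsWithin_univ]
  filter_upwards [ball_mem_nhds θ hε] with t ht hne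
  rcases lt_or_gt_of_ne hne with hlt | hgt
  · refine strictAntiOn_of_deriv_neg (convex_Icc t θ) hg.continuous.continuousOn (fun u hu => ?_)
      (left_mem_Icc.2 hlt.le) (right_mem_Icc.2 hlt.le) hlt
    rw [interior_Icc] at hu
    rw [← sign_eq_neg_one_iff, hsign u (hsub (Icc_subset_uIcc' ⟨hu.1.le, hu.2.le⟩) ht),
      sign_eq_neg_one_iff]
    exact sub_neg.2 hu.2
  · refine strictMonoOn_of_deriv_pos (convex_Icc θ t) hg.continuous.continuousOn (fun u hu => ?_)
      (left_mem_Icc.2 hgt.le) (right_mem_Icc.2 hgt.le) hgt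
    rw [interior_Icc] at hu
    rw [← sign_eq_one_iff, hsign u (hsub (Icc_subset_uIcc ⟨hu.1.le, hu.2.le⟩) ht),
      sign_eq_one_iff]
    exact sub_pos.2 hu.1

theorem strictMonoOn_or_strictAntiOn_of_deriv_ne_zero (hg : Differentiable ℝ g)
    (hne : ∀ t ∈ Ioo α β, deriv g t ≠ 0) :
    StrictMonoOn g (Icc α β) ∨ StrictAntiOn g (Icc α β) := by
  rcases hasDerivWithinAt_forall_lt_or_forall_gt_of_forall_ne (convex_Ioo α β)
    (fun t _ => (hg t).hasDerivAt.hasDerivWithinAt) hne with hneg | hpos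
  · exact Or.inr (strictAntiOn_of_deriv_neg (convex_Icc α β) hg.continuous.continuousOn
      (by rwa [interior_Icc]))
  · exact Or.inl (strictMonoOn_of_deriv_pos (convex_Icc α β) hg.continuous.continuousOn
      (by rwa [interior_Icc]))

theorem deriv_deriv_signs_of_strictMonoOn (hg : Continuous g) (hαβ : α < β)
    (hmono : StrictMonoOn g (Icc α β)) (hα : deriv g α = 0) (hβ : deriv g β = 0)
    (hα' : deriv (deriv g) α ≠ 0) (hβ' : deriv (deriv g) β ≠ 0) :
    0 < deriv (deriv g) α ∧ deriv (deriv g) β < 0 := by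
  constructor
  · refine hα'.lt_or_gt.resolve_left fun hneg => ?_
    have hmax : ∀ᶠ t in 𝓝[>] α, g t ≤ g α :=
      nhdsWithin_le_nhds (isLocalMax_of_deriv_deriv_neg hneg hα hg.continuousAt)
    obtain ⟨t, hle, ht⟩ := (hmax.and (Ioo_mem_nhdsGT hαβ)).exists
    exact (hmono (left_mem_Icc.2 hαβ.le) ⟨ht.1.le, ht.2.le⟩ ht.1).not_ge hle
  · refine hβ'.lt_or_gt.resolve_right fun hpos => ?_
    have hmin : ∀ᶠ t in 𝓝[<] β, g β ≤ g t :=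
      nhdsWithin_le_nhds (isLocalMin_of_deriv_deriv_pos hpos hβ hg.continuousAt)
    obtain ⟨t, hle, ht⟩ := (hmin.and (Ioo_mem_nhdsLT hαβ)).exists
    exact (hmono ⟨ht.1.le, ht.2.le⟩ (right_mem_Icc.2 hαβ.le) ht.2).not_ge hle

theorem deriv_deriv_signs_of_strictAntiOn (hg : Continuous g) (hαβ : α < β)
    (hanti : StrictAntiOn g (Icc α β)) (hα : deriv g α = 0) (hβ : deriv g β = 0)
    (hα' : deriv (deriv g) α ≠ 0) (hβ' : deriv (deriv g) β ≠ 0) :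
    deriv (deriv g) α < 0 ∧ 0 < deriv (deriv g) β := by
  simpa [hα, hβ, hα', hβ'] using deriv_deriv_signs_of_strictMonoOn hg.neg hαβ hanti.neg

theorem periodic_deriv (hg : Function.Periodic g c) : Function.Periodic (deriv g) c := fun t => by
  rw [← deriv_comp_add_const, funext hg]

end OneVariable

section UnitCircle

theorem sphPt_eq_repr_circleExp (t : ℝ) :
    sphPt t = Complex.orthonormalBasisOneI.repr (Circle.exp t : ℂ) := by
  ext i
  fin_cases i <;> simp [sphPt, Complex.orthonormalBasisOneI_repr_apply, Circle.coe_exp,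
    Complex.exp_ofReal_mul_I_re, Complex.exp_ofReal_mul_I_im]

theorem norm_sphPt (t : ℝ) : ‖sphPt t‖ = 1 := by
  rw [sphPt_eq_repr_circleExp, LinearIsometryEquiv.norm_map, Circle.norm_coe]

theorem sphPt_mem_sphere (t : ℝ) : sphPt t ∈ sphere (0 : E2) 1 :=
  mem_sphere_zero_iff_norm.2 (norm_sphPt t)

theorem sphPt_periodic : Function.Periodic sphPt (2 * Real.pi) := fun t => by
  simp only [sphPt_eq_repr_circleExp, Circle.exp_add, Circle.exp_two_pi, mul_one]

theorem hasDerivAt_sphPt (t : ℝ) : HasDerivAt sphPt (sphPt (t + Real.pi / 2)) t := by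
  refine ((EuclideanSpace.equiv (Fin 2) ℝ).symm : (Fin 2 → ℝ) →L[ℝ] E2).hasFDerivAt.comp_hasDerivAt
    t (f := fun t => ![Real.cos t, Real.sin t]) (hasDerivAt_pi.2 fun i => ?_)
  fin_cases i
  · simpa [Real.cos_add_pi_div_two] using Real.hasDerivAt_cos t
  · simpa [Real.sin_add_pi_div_two] using Real.hasDerivAt_sin t

theorem continuous_sphPt : Continuous sphPt :=
  continuous_iff_continuousAt.2 fun t => (hasDerivAt_sphPt t).continuousAt

theorem inner_sphPt_add_pi_div_two (t : ℝ) : ⟪sphPt t, sphPt (t + Real.pi / 2)⟫ = 0 := by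
  simp [sphPt, PiLp.inner_apply, Fin.sum_univ_two, Real.cos_add_pi_div_two,
    Real.sin_add_pi_div_two]
  ring

theorem map_sphPt_nhds (θ : ℝ) : map sphPt (𝓝 θ) = 𝓝[sphere 0 1] (sphPt θ) := by
  let e := Complex.orthonormalBasisOneI.repr
  have he : e.toHomeomorph '' sphere 0 1 = sphere 0 1 := by
    simp [LinearIsometryEquiv.image_sphere]
  calc map sphPt (𝓝 θ)
      = map e (map (fun z : Circle => (z : ℂ)) (map Circle.exp (𝓝 θ))) := by
        rw [funext sphPt_eq_repr_circleExp]
        rfl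
    _ = map e (𝓝[sphere 0 1] (Circle.exp θ : ℂ)) := by
        rw [isLocalHomeomorph_circleExp.map_nhds_eq]
        exact congrArg (map e) (map_nhds_subtype_val (s := sphere (0 : ℂ) 1) (Circle.exp θ))
    _ = 𝓝[sphere 0 1] (sphPt θ) := by
        rw [sphPt_eq_repr_circleExp, ← he]
        exact e.toHomeomorph.isEmbedding.map_nhdsWithin_eq _ _

theorem exists_sphPt_eq {x : E2} (hx : x ∈ sphere 0 1) :
    ∃ t ∈ Ico 0 (2 * Real.pi), sphPt t = x := by
  obtain ⟨z, rfl⟩ := Complex.orthonormalBasisOneI.repr.surjective x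
  have hz : z ∈ Submonoid.unitSphere ℂ := mem_sphere_zero_iff_norm.2 (by simpa using hx)
  obtain ⟨t, ht⟩ := Circle.exp_surjective ⟨z, hz⟩
  obtain ⟨t', ht', heq⟩ := sphPt_periodic.exists_mem_Ico₀ Real.two_pi_pos t
  exact ⟨t', ht', by rw [← heq, sphPt_eq_repr_circleExp, ht]⟩

theorem isStrictLocalMinOn_sphere_of_comp_sphPt {f : E2 → ℝ} {θ : ℝ}
    (h : IsStrictLocalMinOn (f ∘ sphPt) univ θ) :
    IsStrictLocalMinOn f (sphere 0 1) (sphPt θ) := by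
  rw [isStrictLocalMinOn_iff, nhdsWithin_univ] at h
  rw [isStrictLocalMinOn_iff, ← map_sphPt_nhds, eventually_map]
  exact h.mono fun t ht hne => ht fun heq => hne (heq ▸ rfl)

end UnitCircle

namespace Ribbon

variable {n : ℕ} (a : Ribbon n) {i : Fin n}

/-- The node `p i` as a point of the plane. -/
def node (i : Fin n) : E2 := sphPt (a.θ i)

/-- The node `p i` is a local maximum of the ribbon function. -/
def IsMaxNode (i : Fin n) : Prop := deriv (deriv a.g) (a.θ i) < 0

/-- The node `p i` is a local minimum of the ribbon function. -/
def IsMinNode (i : Fin n) : Prop := 0 < deriv (deriv a.g) (a.θ i)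

/-- The angle of the node following `p i`, chosen larger than `θ i`: one full turn is added when
the cyclic order wraps around. -/
def nextAngle (i : Fin n) : ℝ :=
  a.θ (a.next i) + if (i : ℕ) + 1 < n then 0 else 2 * Real.pi

/-- The closed arc of the unit circle from the node `p i` to the next one. -/
def arc (i : Fin n) : Set E2 := sphPt '' Icc (a.θ i) (a.nextAngle i)

theorem differentiable_g : Differentiable ℝ a.g :=
  a.smooth_g.differentiable (by simp)

theorem exists_next_eq (i : Fin n) : ∃ j, a.next j = i := by
  refine ⟨⟨(i + (n - 1)) % n, Nat.mod_lt _ a.n_pos⟩, Fin.ext ?_⟩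
  have hsum : (i : ℕ) + (n - 1) + 1 = i + n := by have := a.n_pos; omega
  simp [next, Nat.mod_add_mod, hsum, Nat.mod_eq_of_lt i.isLt]

theorem next_next_ne (hn : 2 < n) (i : Fin n) : a.next (a.next i) ≠ i := fun h => by
  have hval : (((i : ℕ) + 1) % n + 1) % n = i := congrArg Fin.val h
  have hmod : (i : ℕ) + 2 ≡ i + 0 [MOD n] := by
    rw [Nat.mod_add_mod] at hval
    rwa [Nat.ModEq, add_zero, Nat.mod_eq_of_lt i.isLt]
  have hdvd : n ∣ 2 := Nat.modEq_zero_iff_dvd.1 (Nat.ModEq.add_left_cancel' _ hmod)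
  exact absurd (Nat.le_of_dvd two_pos hdvd) hn.not_ge

theorem apply_nextAngle {β : Type*} {h : ℝ → β} (hper : Function.Periodic h (2 * Real.pi))
    (i : Fin n) : h (a.nextAngle i) = h (a.θ (a.next i)) := by
  rw [nextAngle]
  split_ifs
  · rw [add_zero]
  · exact hper _

theorem val_next_of_lt (h : (i : ℕ) + 1 < n) : (a.next i : ℕ) = i + 1 := Nat.mod_eq_of_lt h

theorem val_next_of_not_lt (h : ¬(i : ℕ) + 1 < n) : (a.next i : ℕ) = 0 := by
  have hi : (i : ℕ) + 1 = n := le_antisymm i.isLt (not_lt.1 h)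
  simp only [next, hi, Nat.mod_self]

theorem theta_lt_nextAngle (i : Fin n) : a.θ i < a.nextAngle i := by
  rw [nextAngle]
  split_ifs with h
  · rw [add_zero]
    exact a.theta_mono (Fin.lt_def.2 (a.val_next_of_lt h ▸ Nat.lt_succ_self i))
  · linarith [(a.theta_mem i).2, (a.theta_mem (a.next i)).1]

theorem deriv_ne_zero_of_mem_Ioo {t : ℝ} (ht : t ∈ Ioo (a.θ i) (a.nextAngle i)) :
    deriv a.g t ≠ 0 := by
  intro hcrit
  have hlower := (a.theta_mem i).1
  have hupper := (a.theta_mem (a.next i)).2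
  rw [nextAngle] at ht
  by_cases hturn : t < 2 * Real.pi
  · obtain ⟨j, rfl⟩ := a.crit_only t ⟨hlower.trans ht.1.le, hturn⟩ hcrit
    have hij := Fin.lt_def.1 (a.theta_mono.lt_iff_lt.1 ht.1)
    have hi : (i : ℕ) + 1 < n := by omega
    rw [if_pos hi, add_zero] at ht
    have hjnext := Fin.lt_def.1 (a.theta_mono.lt_iff_lt.1 ht.2)
    rw [a.val_next_of_lt hi] at hjnext
    omega
  · split_ifs at ht with hi
    · linarith [ht.2]
    · obtain ⟨j, hj⟩ := a.crit_only (t - 2 * Real.pi) ⟨by linarith, by linarith [ht.2]⟩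
        ((periodic_deriv a.periodic_g).sub_eq t ▸ hcrit)
      have hjnext : a.θ j < a.θ (a.next i) := by linarith [ht.2]
      rw [a.theta_mono.lt_iff_lt, Fin.lt_def, a.val_next_of_not_lt hi] at hjnext
      exact absurd hjnext (Nat.not_lt_zero _)

theorem strictMonoOn_or_strictAntiOn (i : Fin n) :
    (StrictMonoOn a.g (Icc (a.θ i) (a.nextAngle i)) ∧ a.IsMinNode i ∧ a.IsMaxNode (a.next i)) ∨
      (StrictAntiOn a.g (Icc (a.θ i) (a.nextAngle i)) ∧ a.IsMaxNode i ∧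
        a.IsMinNode (a.next i)) := by
  have hper := periodic_deriv a.periodic_g
  have hcrit : deriv a.g (a.nextAngle i) = 0 := by rw [a.apply_nextAngle hper, a.node_crit]
  have hderiv2 := a.apply_nextAngle (periodic_deriv hper) i
  have hnondeg : deriv (deriv a.g) (a.nextAngle i) ≠ 0 := hderiv2 ▸ a.node_nondeg _
  have hcont := a.differentiable_g.continuous
  rw [IsMaxNode, IsMinNode, IsMaxNode, IsMinNode, ← hderiv2]
  exact (strictMonoOn_or_strictAntiOn_of_deriv_ne_zero a.differentiable_g
    fun t ht => a.deriv_ne_zero_of_mem_Ioo ht).imp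
    (fun h => ⟨h, deriv_deriv_signs_of_strictMonoOn hcont (a.theta_lt_nextAngle i) h
      (a.node_crit i) hcrit (a.node_nondeg i) hnondeg⟩)
    fun h => ⟨h, deriv_deriv_signs_of_strictAntiOn hcont (a.theta_lt_nextAngle i) h
      (a.node_crit i) hcrit (a.node_nondeg i) hnondeg⟩

variable {a}

theorem IsMaxNode.not_isMinNode (h : a.IsMaxNode i) : ¬a.IsMinNode i := lt_asymm h

theorem IsMaxNode.strictAntiOn (h : a.IsMaxNode i) :
    StrictAntiOn a.g (Icc (a.θ i) (a.nextAngle i)) ∧ a.IsMinNode (a.next i) := by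
  rcases a.strictMonoOn_or_strictAntiOn i with ⟨-, hmin, -⟩ | ⟨hanti, -, hmin⟩
  · exact absurd hmin h.not_isMinNode
  · exact ⟨hanti, hmin⟩

theorem IsMaxNode.strictMonoOn (h : a.IsMaxNode (a.next i)) :
    StrictMonoOn a.g (Icc (a.θ i) (a.nextAngle i)) ∧ a.IsMinNode i := by
  rcases a.strictMonoOn_or_strictAntiOn i with ⟨hmono, hmin, -⟩ | ⟨-, -, hmin⟩
  · exact ⟨hmono, hmin⟩
  · exact absurd hmin h.not_isMinNode

variable (a) (i)

theorem isCompact_arc : IsCompact (a.arc i) := isCompact_Icc.image continuous_sphPt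

theorem isPreconnected_arc : IsPreconnected (a.arc i) :=
  isPreconnected_Icc.image _ continuous_sphPt.continuousOn

theorem arc_subset_closedBall : a.arc i ⊆ closedBall 0 1 :=
  image_subset_iff.2 fun t _ => sphere_subset_closedBall (sphPt_mem_sphere t)

theorem node_mem_arc : a.node i ∈ a.arc i :=
  mem_image_of_mem _ (left_mem_Icc.2 (a.theta_lt_nextAngle i).le)

theorem node_next_mem_arc : a.node (a.next i) ∈ a.arc i :=
  ⟨a.nextAngle i, right_mem_Icc.2 (a.theta_lt_nextAngle i).le, a.apply_nextAngle sphPt_periodic i⟩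

end Ribbon

namespace IsExtension

open Ribbon

variable {n : ℕ} {a : Ribbon n} {f : E2 → ℝ} {i j p z : Fin n} {x : E2} {l : ℝ}

theorem contDiff_one (hf : IsExtension a f) : ContDiff ℝ 1 f :=
  hf.1.of_le (mod_cast le_top)

theorem apply_node (hf : IsExtension a f) (i : Fin n) : f (a.node i) = a.g (a.θ i) :=
  hf.2.1 _

theorem node_injective (hf : IsExtension a f) : Function.Injective a.node := fun i j h =>
  a.values_distinct i j (by rw [← hf.apply_node, h, hf.apply_node])

theorem not_isBallStationary_node (hf : IsExtension a f) (hmax : a.IsMaxNode i) (hν : a.ν i = 1) :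
    ¬IsBallStationary f (a.node i) := fun h => by
  have hout : 0 < ⟪gradient f (a.node i), a.node i⟫ := by
    simpa [hν, node] using (hf.2.2.2 i).1 hmax
  exact absurd (h ▸ hout) (neg_nonpos.2 (norm_nonneg _)).not_gt

theorem isStrictLocalMinOn_node (hf : IsExtension a f) (hmin : a.IsMinNode i) (hν : a.ν i = 1) :
    IsStrictLocalMinOn f (closedBall 0 1) (a.node i) := by
  refine isStrictLocalMinOn_closedBall hf.contDiff_one (sphPt_mem_sphere _)
    (isStrictLocalMinOn_sphere_of_comp_sphPt ?_) (by simpa [hν, node] using (hf.2.2.2 i).2 hmin)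
  rw [show f ∘ sphPt = a.g from funext hf.2.1]
  exact isStrictLocalMinOn_univ_of_deriv_deriv_pos a.differentiable_g (a.node_crit i) hmin

theorem exists_node_eq_of_isBallStationary (hf : IsExtension a f) (hx : x ∈ sphere 0 1)
    (h : IsBallStationary f x) : ∃ i, a.node i = x := by
  obtain ⟨t, ht, rfl⟩ := exists_sphPt_eq hx
  have hderiv : HasDerivAt (f ∘ sphPt) (fderiv ℝ f (sphPt t) (sphPt (t + Real.pi / 2))) t :=
    (hf.contDiff_one.differentiable one_ne_zero _).hasFDerivAt.comp_hasDerivAt t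
      (hasDerivAt_sphPt t)
  rw [show f ∘ sphPt = a.g from funext hf.2.1, ← inner_gradient_left,
    h.inner_gradient_eq_zero (norm_sphPt t) (inner_sphPt_add_pi_div_two t)] at hderiv
  obtain ⟨i, rfl⟩ := a.crit_only t ht hderiv.deriv
  exact ⟨i, rfl⟩

theorem eq_or_lt_of_mem_arc (hf : IsExtension a f) (hmax : a.IsMaxNode i) (hx : x ∈ a.arc i) :
    x = a.node i ∨ f x < a.g (a.θ i) := by
  obtain ⟨t, ht, rfl⟩ := hx
  refine ht.1.eq_or_lt.imp (fun h : a.θ i = t => congrArg sphPt h.symm) fun h => ?_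
  rw [hf.2.1]
  exact hmax.strictAntiOn.1 (left_mem_Icc.2 (a.theta_lt_nextAngle i).le) ht h

theorem eq_or_lt_of_mem_arc_next (hf : IsExtension a f) (hmax : a.IsMaxNode (a.next i))
    (hx : x ∈ a.arc i) : x = a.node (a.next i) ∨ f x < a.g (a.θ (a.next i)) := by
  obtain ⟨t, ht, rfl⟩ := hx
  refine ht.2.eq_or_lt.imp
    (fun h : t = a.nextAngle i => h ▸ a.apply_nextAngle sphPt_periodic i) fun h => ?_
  rw [hf.2.1, ← a.apply_nextAngle a.periodic_g]
  exact hmax.strictMonoOn.1 ht (right_mem_Icc.2 (a.theta_lt_nextAngle i).le) h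

-- The two arcs adjacent to the maximum join its neighbours. At the maximum `f` decreases inwards,
-- so the arcs can be pushed below its level.
theorem exists_mem_joiningLevels_lt (hf : IsExtension a f) (hmax : a.IsMaxNode (a.next i))
    (hν : a.ν (a.next i) = 1) :
    ∃ l ∈ joiningLevels f (closedBall 0 1) (a.node i) (a.node (a.next (a.next i))),
      l < a.g (a.θ (a.next i)) := by
  set j := a.next i
  have hbelow : ∀ x ∈ a.arc i ∪ a.arc j, x = a.node j ∨ f x < a.g (a.θ j) := fun x hx =>
    hx.elim (hf.eq_or_lt_of_mem_arc_next hmax) (hf.eq_or_lt_of_mem_arc hmax)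
  have hminBelow {k : Fin n} (hmin : a.IsMinNode k) (hk : a.node k ∈ a.arc i ∪ a.arc j) :
      f (a.node k) < a.g (a.θ j) :=
    (hbelow _ hk).resolve_left fun h => hmax.not_isMinNode (hf.node_injective h ▸ hmin)
  have hleft : a.node i ∈ a.arc i ∪ a.arc j := Or.inl (a.node_mem_arc i)
  have hright : a.node (a.next j) ∈ a.arc i ∪ a.arc j := Or.inr (a.node_next_mem_arc j)
  refine exists_mem_joiningLevels_lt_of_not_isBallStationary hf.contDiff_one
    ((a.isCompact_arc i).union (a.isCompact_arc j))
    ((a.isPreconnected_arc i).union _ (a.node_next_mem_arc i) (a.node_mem_arc j)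
      (a.isPreconnected_arc j))
    (union_subset (a.arc_subset_closedBall i) (a.arc_subset_closedBall j))
    (fun x hx => (hbelow x hx).elim (fun h => h ▸ (hf.apply_node j).le) le_of_lt)
    (fun x hx hxj => (hbelow x hx).elim (fun h => h ▸ hf.not_isBallStationary_node hmax hν)
      fun h => absurd hxj h.ne)
    hleft hright (hminBelow hmax.strictMonoOn.2 hleft) (hminBelow hmax.strictAntiOn.2 hright)

theorem exists_mem_critPts_of_mem_joiningLevels (hf : IsExtension a f) (hpz : p ≠ z)
    (hp : a.IsMinNode p) (hνp : a.ν p = 1) (hz : a.IsMinNode z)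
    (hl : l ∈ joiningLevels f (closedBall 0 1) (a.node p) (a.node z))
    (hneg : ∀ j, a.ν j = -1 → a.g (a.θ j) ∉ Icc (a.g (a.θ p)) l) :
    ∃ x ∈ critPts f, f x ∈ Icc (a.g (a.θ p)) l := by
  have hpos : ∀ j, f (a.node j) ∈ Icc (f (a.node p)) l → a.ν j = 1 := fun j hj =>
    (a.nu_sign j).resolve_right fun h => hneg j h (by rwa [← hf.apply_node, ← hf.apply_node])
  have hzmin : f (a.node z) < f (a.node p) ∨
      IsStrictLocalMinOn f (closedBall 0 1) (a.node z) :=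
    (lt_or_ge _ _).imp_right fun h =>
      hf.isStrictLocalMinOn_node hz (hpos z ⟨h, right_le_of_mem_joiningLevels hl⟩)
  obtain ⟨x, hxball, hstat, hnotmin, hxl⟩ :=
    exists_isBallStationary_not_isStrictLocalMinOn hf.contDiff_one (hf.node_injective.ne hpz)
      (hf.isStrictLocalMinOn_node hp hνp) hzmin hl
  refine ⟨x, ?_, hf.apply_node p ▸ hxl⟩
  rcases (mem_closedBall.1 hxball).lt_or_eq with hlt | heq
  · exact ⟨hlt, hstat.fderiv_eq_zero (mem_ball_zero_iff.1 hlt)⟩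
  · obtain ⟨j, rfl⟩ := hf.exists_node_eq_of_isBallStationary heq hstat
    rcases (a.node_nondeg j).lt_or_gt with hmax | hmin
    · exact absurd hstat (hf.not_isBallStationary_node hmax (hpos j hxl))
    · exact absurd (hf.isStrictLocalMinOn_node hmin (hpos j hxl)) hnotmin

theorem exists_mem_critPts_of_positive_pair (hf : IsExtension a f) (hn : 2 < n) (hi : a.ν i = 1)
    (hnext : a.ν (a.next i) = 1)
    (hneg : ∀ j, a.ν j = -1 → a.g (a.θ j) ∉ uIcc (a.g (a.θ i)) (a.g (a.θ (a.next i)))) :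
    ∃ x ∈ critPts f, f x ∈ uIcc (a.g (a.θ i)) (a.g (a.θ (a.next i))) := by
  rcases a.strictMonoOn_or_strictAntiOn i with ⟨-, hmin, hmax⟩ | ⟨-, hmax, hmin⟩
  · obtain ⟨l, hl, hlt⟩ := hf.exists_mem_joiningLevels_lt hmax hnext
    have hsub := (Icc_subset_Icc_right hlt.le).trans (Icc_subset_uIcc (a := a.g (a.θ i)))
    obtain ⟨x, hx, hxl⟩ := hf.exists_mem_critPts_of_mem_joiningLevels (a.next_next_ne hn i).symm
      hmin hi hmax.strictAntiOn.2 hl fun j hj h => hneg j hj (hsub h)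
    exact ⟨x, hx, hsub hxl⟩
  · obtain ⟨k, rfl⟩ := a.exists_next_eq i
    obtain ⟨l, hl, hlt⟩ := hf.exists_mem_joiningLevels_lt hmax hi
    have hsub := (Icc_subset_Icc_right hlt.le).trans
      (Icc_subset_uIcc' (b := a.g (a.θ (a.next (a.next k)))))
    obtain ⟨x, hx, hxl⟩ := hf.exists_mem_critPts_of_mem_joiningLevels (a.next_next_ne hn k)
      hmin hnext hmax.strictMonoOn.2 (joiningLevels_comm.subset hl) fun j hj h => hneg j hj (hsub h)
    exact ⟨x, hx, hsub hxl⟩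

theorem reducedClusterNumber_le_encard_image (hf : IsExtension a f) (hn : 2 < n) :
    (reducedClusterNumber a : ℕ∞) ≤ (f '' critPts f).encard := by
  rcases (f '' critPts f).finite_or_infinite with hfin | hinf
  · rw [hfin.encard_eq_coe_toFinset_card, Nat.cast_le]
    refine Nat.sInf_le ⟨_, rfl, fun i ⟨hi, hnext, hneg⟩ => ?_⟩
    obtain ⟨x, hx, hxi⟩ := hf.exists_mem_critPts_of_positive_pair hn hi hnext hneg
    exact ⟨f x, hfin.mem_toFinset.2 (mem_image_of_mem f hx), hxi⟩
  · rw [hinf.encard_eq]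
    exact le_top

end IsExtension

/-- Every extension of a ribbon `a` with `n ≥ 4` nodes has at least `δ₀(a)` critical points
in the open unit disk; that is, `γ(a) ≥ δ₀(a)`. -/
theorem stmt_6 (n : ℕ) (hn : 4 ≤ n) (a : Ribbon n) :
    (∀ f : E2 → ℝ, IsExtension a f →
      ((reducedClusterNumber a : ℕ) : ℕ∞) ≤ (critPts f).encard) ∧
    ((reducedClusterNumber a : ℕ∞) ≤ gammaR a) := by
  have hbound : ∀ f : E2 → ℝ, IsExtension a f →
      (reducedClusterNumber a : ℕ∞) ≤ (critPts f).encard := fun f hf =>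
    (hf.reducedClusterNumber_le_encard_image (by omega)).trans (encard_image_le f _)
  refine ⟨hbound, le_sInf ?_⟩
  rintro k ⟨f, hf, rfl⟩
  exact hbound f hf
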